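/- The bidual S₀** is unitally order isomorphic to B(ℓ²(ℕ)): there is a linear bijection Φ : S₀** → B(ℓ²(ℕ)) that sends the canonical image of the identity I of S₀ to the identity operator and maps the positive cone of S₀** bijectively onto the cone of positive operators in B(ℓ²(ℕ)). -/

import Mathlib

noncomputable section

open scoped ComplexOrder InnerProductSpace

/-- The Hilbert space ℓ²(ℕ) of square-summable complex sequences. -/
abbrev Hs : Type := lp (fun _ : ℕ => ℂ) 2

/-- The standard orthonormal basis vectors of ℓ²(ℕ) (indexed from 0). -/
def e (i : ℕ) : Hs := lp.single 2 i 1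

/-- The matrix unit `E i j : x ↦ ⟨x, e j⟩ e i`. -/
def E (i j : ℕ) : Hs →L[ℂ] Hs := (innerSL ℂ (e j)).smulRight (e i)

/-- `K₀`: the norm-closed linear span of the matrix units `E i j`, `(i,j) ≠ (0,0)`. -/
def K0 : Submodule ℂ (Hs →L[ℂ] Hs) :=
  (Submodule.span ℂ {T | ∃ i j : ℕ, (i, j) ≠ (0, 0) ∧ T = E i j}).topologicalClosure

/-- The operator system `S₀` spanned by `K₀` and the identity operator. -/
def S0 : Submodule ℂ (Hs →L[ℂ] Hs) := Submodule.span ℂ {(1 : Hs →L[ℂ] Hs)} ⊔ K0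

lemma one_mem_S0 : (1 : Hs →L[ℂ] Hs) ∈ S0 :=
  Submodule.mem_sup_left (Submodule.mem_span_singleton_self _)

/-- The matrix entry `X_{ij} = ⟨X e_j, e_i⟩` of a bounded operator on ℓ²(ℕ). -/
def entry (X : Hs →L[ℂ] Hs) (i j : ℕ) : ℂ := ⟪e i, X (e j)⟫_ℂ

/-- `φ_{n+1}(X) = V_{n+1}* X V_{n+1}`, the upper-left (n+1)×(n+1) corner of `X`. -/
def phi (n : ℕ) (X : Hs →L[ℂ] Hs) : Matrix (Fin (n+1)) (Fin (n+1)) ℂ :=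
  fun i j => entry X i j

/-- `Q_{n+1}`: the projection onto the orthocomplement of the span of `e 0, …, e n`. -/
def Qop (n : ℕ) : Hs →L[ℂ] Hs := 1 - ∑ i : Fin (n+1), E i i

/-- `ψ_{n+1}(Y) = V_{n+1} Y V_{n+1}* + y₀₀ Q_{n+1}`. -/
def psi (n : ℕ) (Y : Matrix (Fin (n+1)) (Fin (n+1)) ℂ) : Hs →L[ℂ] Hs :=
  (∑ i : Fin (n+1), ∑ j : Fin (n+1), Y i j • E i j) + Y 0 0 • Qop n

/-- Positivity in the C*-algebra of m×m matrices over a star ring: `M = N* N`. -/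
def MatPos {A : Type*} [Ring A] [StarRing A] {m : ℕ}
    (M : Matrix (Fin m) (Fin m) A) : Prop :=
  ∃ N : Matrix (Fin m) (Fin m) A, M = N.conjTranspose * N

/-- Complete positivity of a map between star rings: every matrix amplification
preserves positivity. -/
def IsCPfun {A B : Type*} [Ring A] [StarRing A] [Ring B] [StarRing B]
    (θ : A → B) : Prop :=
  ∀ (m : ℕ) (M : Matrix (Fin m) (Fin m) A), MatPos M → MatPos (M.map θ)

theorem abs_lemma {A : Type*} [NormedAddCommGroup A] [NormedSpace ℂ A] (f : A →L[ℂ] ℂ)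
    (P : ℕ → A → A) (hsmul : ∀ n (c : ℂ) X, P n (c • X) = c • P n X)
    (h1 : ∀ X, Filter.Tendsto (fun n => P n X) Filter.atTop (nhds X))
    (h2 : ∀ n X Y, ‖P n X + (Y - P n Y)‖ ^ 2 ≤ ‖X‖ ^ 2 + ‖Y‖ ^ 2) (ε : ℝ) (hε : 0 < ε) :
    ∀ᶠ n in Filter.atTop, ∀ Y, ‖f (Y - P n Y)‖ ≤ ε * ‖Y‖ := by
  have key : ∀ n X Y, ‖X‖ ≤ 1 → ‖Y‖ ≤ 1 → ‖f (P n X)‖ ^ 2 + ‖f (Y - P n Y)‖ ^ 2 ≤ ‖f‖ ^ 2 := by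
    intro n X Y hX hY
    set a := f (P n X) with ha
    set b := f (Y - P n Y) with hb
    have h := h2 n (star a • X) (star b • Y)
    have e1 : f (P n (star a • X) + (star b • Y - P n (star b • Y))) = ((‖a‖^2 + ‖b‖^2 : ℝ) : ℂ) := by
      rw [hsmul, hsmul, ← smul_sub, map_add, map_smul, map_smul, ← ha, ← hb]
      simp only [smul_eq_mul]
      push_cast
      rw [← Complex.conj_mul', ← Complex.conj_mul']
      rfl
    have e2 := f.le_opNorm (P n (star a • X) + (star b • Y - P n (star b • Y)))
    rw [e1, Complex.norm_real, Real.norm_of_nonneg (by positivity)] at e2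
    rw [norm_smul, norm_smul, norm_star, norm_star] at h
    have h3 : ‖P n (star a • X) + (star b • Y - P n (star b • Y))‖^2 ≤ ‖a‖^2+‖b‖^2 := by
      refine h.trans ?_
      rw [mul_pow, mul_pow]
      have i1 : ‖X‖^2 ≤ 1 := pow_le_one₀ (norm_nonneg _) hX
      have i2 : ‖Y‖^2 ≤ 1 := pow_le_one₀ (norm_nonneg _) hY
      nlinarith [sq_nonneg ‖a‖, sq_nonneg ‖b‖]
    have hs : 0 ≤ ‖a‖^2 + ‖b‖^2 := by positivity
    generalize ‖P n (star a • X) + (star b • Y - P n (star b • Y))‖ = z at *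
    generalize ‖a‖^2 + ‖b‖^2 = s at *
    have h4 : s^2 ≤ ‖f‖^2 * s := by
      calc s^2 ≤ (‖f‖ * z)^2 := by gcongr
        _ = ‖f‖^2 * z^2 := by ring
        _ ≤ _ := by gcongr
    rcases hs.eq_or_lt with h5 | h5
    · rw [← h5]; positivity
    · rw [sq] at h4; exact le_of_mul_le_mul_right h4 h5
  obtain ⟨X, hX, hfX⟩ : ∃ X, ‖X‖ ≤ 1 ∧ ‖f‖^2 - ε^2 < ‖f X‖^2 := by
    by_cases h0 : ‖f‖^2 - ε^2 < 0
    · exact ⟨0, by simp, by simpa using h0⟩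
    push Not at h0
    obtain ⟨X, hX, h⟩ := f.exists_lt_apply_of_lt_opNorm (r := Real.sqrt (‖f‖^2 - ε^2)) (by
      rw [Real.sqrt_lt' ]
      · nlinarith
      · rcases (norm_nonneg f).eq_or_lt with h | h
        · rw [← h] at h0; nlinarith
        · exact h)
    refine ⟨X, hX.le, ?_⟩
    rwa [Real.sqrt_lt' (lt_of_le_of_lt (Real.sqrt_nonneg _) h)] at h
  have ht : Filter.Tendsto (fun n => ‖f (P n X)‖^2) Filter.atTop (nhds (‖f X‖^2)) :=
    (((f.continuous.tendsto X).comp (h1 X)).norm).pow 2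
  filter_upwards [ht.eventually (lt_mem_nhds hfX)] with n hn Y
  by_cases hY : Y = 0
  · subst hY
    have := hsmul n 0 0
    simp at this
    simp [this]
  have hY' : 0 < ‖Y‖ := norm_pos_iff.2 hY
  have h := key n X (((‖Y‖⁻¹ : ℝ) : ℂ) • Y) hX (by
    rw [norm_smul, Complex.norm_real, norm_inv, norm_norm, inv_mul_cancel₀ hY'.ne'])
  rw [hsmul, ← smul_sub, map_smul, norm_smul, Complex.norm_real, norm_inv, norm_norm] at h
  have h5 : ‖Y‖⁻¹ * ‖f (Y - P n Y)‖ ≤ ε := by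
    apply le_of_sq_le_sq _ hε.le
    linarith
  rwa [inv_mul_le_iff₀ hY', mul_comm] at h5

lemma E_apply (i j : ℕ) (x : Hs) : E i j x = ⟪e j, x⟫_ℂ • e i := by
  simp [E]

lemma inner_e (i j : ℕ) : ⟪e i, e j⟫_ℂ = if i = j then 1 else 0 := by
  unfold e
  rw [lp.inner_single_left]
  simp [Pi.single_apply]

lemma inner_e_apply (i : ℕ) (x : Hs) : ⟪e i, x⟫_ℂ = x i := by
  unfold e
  rw [lp.inner_single_left]
  simp

lemma E_mul (i j k l : ℕ) : E i j * E k l = if j = k then E i l else 0 := by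
  ext1 x
  rw [mul_apply_eq_comp, E_apply, E_apply, inner_smul_right, inner_e]
  split_ifs with h
  · simp [E_apply]
  · simp

/-- finite projections -/
def Pn (n : ℕ) : Hs →L[ℂ] Hs := ∑ i ∈ Finset.range n, E i i

lemma Pn_apply (n : ℕ) (x : Hs) : Pn n x = ∑ i ∈ Finset.range n, ⟪e i, x⟫_ℂ • e i := by
  simp [Pn, E_apply]

lemma Pn_mul_E (n i j : ℕ) : Pn n * E i j = if i < n then E i j else 0 := by
  simp [Pn, Finset.sum_mul, E_mul]

lemma E_mul_Pn (n i j : ℕ) : E i j * Pn n = if j < n then E i j else 0 := by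
  simp [Pn, Finset.mul_sum, E_mul]

lemma Pn_idem (n : ℕ) : Pn n * Pn n = Pn n := by
  conv_lhs => rhs; rw [Pn]
  rw [Finset.mul_sum, Pn]
  apply Finset.sum_congr rfl
  intro i hi
  rw [← Pn, Pn_mul_E, if_pos (Finset.mem_range.1 hi)]

lemma Pn_idem_apply (n : ℕ) (x : Hs) : Pn n (Pn n x) = Pn n x := by
  rw [← mul_apply_eq_comp, Pn_idem]

lemma Pn_symm (n : ℕ) (x y : Hs) : ⟪Pn n x, y⟫_ℂ = ⟪x, Pn n y⟫_ℂ := by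
  rw [Pn_apply, Pn_apply, sum_inner, inner_sum]
  apply Finset.sum_congr rfl
  intro i hi
  rw [inner_smul_left, inner_smul_right, inner_conj_symm, mul_comm]

lemma Pn_orth (n : ℕ) (x y : Hs) : ⟪Pn n x, y - Pn n y⟫_ℂ = 0 := by
  rw [Pn_symm, map_sub, Pn_idem_apply, sub_self, inner_zero_right]

lemma Pn_pyth (n : ℕ) (x y : Hs) :
    ‖Pn n x + (y - Pn n y)‖ ^ 2 = ‖Pn n x‖ ^ 2 + ‖y - Pn n y‖ ^ 2 := by
  have := norm_add_sq_eq_norm_sq_add_norm_sq_of_inner_eq_zero (𝕜 := ℂ) _ _ (Pn_orth n x y)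
  simpa [sq] using this

lemma Pn_pyth' (n : ℕ) (x : Hs) :
    ‖x‖ ^ 2 = ‖Pn n x‖ ^ 2 + ‖x - Pn n x‖ ^ 2 := by
  rw [← Pn_pyth]; simp

lemma Pn_le (n : ℕ) (x : Hs) : ‖Pn n x‖ ≤ ‖x‖ := by
  apply le_of_sq_le_sq _ (norm_nonneg _)
  rw [Pn_pyth' n x]; nlinarith [sq_nonneg ‖x - Pn n x‖]

lemma Pn_le' (n : ℕ) (x : Hs) : ‖x - Pn n x‖ ≤ ‖x‖ := by
  apply le_of_sq_le_sq _ (norm_nonneg _)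
  rw [Pn_pyth' n x]; nlinarith [sq_nonneg ‖Pn n x‖]

lemma Pn_norm (n : ℕ) : ‖Pn n‖ ≤ 1 :=
  ContinuousLinearMap.opNorm_le_bound _ zero_le_one (fun x => by simpa using Pn_le n x)

lemma Pn_tendsto (x : Hs) : Filter.Tendsto (fun n => Pn n x) Filter.atTop (nhds x) := by
  have h := (lp.hasSum_single (E := fun _ : ℕ => ℂ) (p := 2) (by simp) x).tendsto_sum_nat
  refine h.congr fun n => ?_
  rw [Pn_apply]
  apply Finset.sum_congr rfl
  intro i hi
  rw [inner_e_apply, e, ← lp.single_smul]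
  simp

lemma left_ineq (n : ℕ) (X Y : Hs →L[ℂ] Hs) :
    ‖Pn n * X + (Y - Pn n * Y)‖ ^ 2 ≤ ‖X‖ ^ 2 + ‖Y‖ ^ 2 := by
  have : ‖Pn n * X + (Y - Pn n * Y)‖ ≤ Real.sqrt (‖X‖ ^ 2 + ‖Y‖ ^ 2) := by
    apply ContinuousLinearMap.opNorm_le_bound _ (Real.sqrt_nonneg _)
    intro v
    apply le_of_sq_le_sq _ (by positivity)
    rw [mul_pow, Real.sq_sqrt (by positivity)]
    have h : (Pn n * X + (Y - Pn n * Y)) v = Pn n (X v) + (Y v - Pn n (Y v)) := rfl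
    rw [h, Pn_pyth, add_mul, ← mul_pow, ← mul_pow]
    gcongr
    · exact (Pn_le _ _).trans (X.le_opNorm v)
    · exact (Pn_le' _ _).trans (Y.le_opNorm v)
  calc _ ≤ (Real.sqrt (‖X‖ ^ 2 + ‖Y‖ ^ 2))^2 := by gcongr
    _ = _ := Real.sq_sqrt (by positivity)

lemma right_ineq (n : ℕ) (X Y : Hs →L[ℂ] Hs) :
    ‖X * Pn n + (Y - Y * Pn n)‖ ^ 2 ≤ ‖X‖ ^ 2 + ‖Y‖ ^ 2 := by
  have : ‖X * Pn n + (Y - Y * Pn n)‖ ≤ Real.sqrt (‖X‖ ^ 2 + ‖Y‖ ^ 2) := by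
    apply ContinuousLinearMap.opNorm_le_bound _ (Real.sqrt_nonneg _)
    intro v
    apply le_of_sq_le_sq _ (by positivity)
    rw [mul_pow, Real.sq_sqrt (by positivity)]
    have h : (X * Pn n + (Y - Y * Pn n)) v = X (Pn n v) + Y (v - Pn n v) := by
      rw [map_sub]; rfl
    have h2 : ‖X (Pn n v) + Y (v - Pn n v)‖ ≤ ‖X‖ * ‖Pn n v‖ + ‖Y‖ * ‖v - Pn n v‖ :=
      (norm_add_le _ _).trans (add_le_add (X.le_opNorm _) (Y.le_opNorm _))
    rw [h, Pn_pyth' n v]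
    calc _ ≤ (‖X‖ * ‖Pn n v‖ + ‖Y‖ * ‖v - Pn n v‖)^2 := by gcongr
      _ ≤ _ := by nlinarith [sq_nonneg (‖X‖ * ‖v - Pn n v‖ - ‖Y‖ * ‖Pn n v‖)]
  calc _ ≤ (Real.sqrt (‖X‖ ^ 2 + ‖Y‖ ^ 2))^2 := by gcongr
    _ = _ := Real.sq_sqrt (by positivity)

/-- compact operators -/
def KK : Submodule ℂ (Hs →L[ℂ] Hs) :=
  (Submodule.span ℂ {T | ∃ i j : ℕ, T = E i j}).topologicalClosure

lemma E_mem_KK (i j : ℕ) : E i j ∈ KK :=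
  Submodule.le_topologicalClosure _ (Submodule.subset_span ⟨i, j, rfl⟩)

lemma KK_closed : IsClosed (KK : Set (Hs →L[ℂ] Hs)) := Submodule.isClosed_topologicalClosure _

/-- continuous linear maps out of KK checked on matrix units -/
lemma KK_map (L : (Hs →L[ℂ] Hs) →L[ℂ] (Hs →L[ℂ] Hs)) (M : Submodule ℂ (Hs →L[ℂ] Hs))
    (hM : IsClosed (M : Set (Hs →L[ℂ] Hs))) (h : ∀ i j, L (E i j) ∈ M) :
    ∀ X ∈ KK, L X ∈ M := by
  have : KK ≤ M.comap (L : (Hs →L[ℂ] Hs) →ₗ[ℂ] (Hs →L[ℂ] Hs)) := by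
    apply Submodule.topologicalClosure_minimal
    · rw [Submodule.span_le]
      rintro _ ⟨i, j, rfl⟩
      exact h i j
    · exact hM.preimage L.continuous
  exact this

lemma Pn_mul_mem (n : ℕ) (X : Hs →L[ℂ] Hs) (hX : X ∈ KK) : Pn n * X ∈ KK := by
  refine KK_map (ContinuousLinearMap.mul ℂ _ (Pn n)) KK KK_closed ?_ X hX
  intro i j
  rw [ContinuousLinearMap.mul_apply', Pn_mul_E]
  split_ifs
  · exact E_mem_KK i j
  · exact zero_mem _

lemma mul_Pn_mem (n : ℕ) (X : Hs →L[ℂ] Hs) (hX : X ∈ KK) : X * Pn n ∈ KK := by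
  refine KK_map ((ContinuousLinearMap.mul ℂ _).flip (Pn n)) KK KK_closed ?_ X hX
  intro i j
  rw [ContinuousLinearMap.flip_apply, ContinuousLinearMap.mul_apply', E_mul_Pn]
  split_ifs
  · exact E_mem_KK i j
  · exact zero_mem _

lemma tendsto_KK (L : ℕ → (Hs →L[ℂ] Hs) →L[ℂ] (Hs →L[ℂ] Hs)) (hL : ∀ n X, ‖L n X‖ ≤ ‖X‖)
    (h : ∀ i j, ∀ᶠ n in Filter.atTop, L n (E i j) = E i j) (X : Hs →L[ℂ] Hs) (hX : X ∈ KK) :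
    Filter.Tendsto (fun n => L n X) Filter.atTop (nhds X) := by
  have hspan : ∀ Y ∈ Submodule.span ℂ {T | ∃ i j : ℕ, T = E i j},
      ∀ᶠ n in Filter.atTop, L n Y = Y := by
    intro Y hY
    induction hY using Submodule.span_induction with
    | mem x hx => obtain ⟨i, j, rfl⟩ := hx; exact h i j
    | zero => simp
    | add x y _ _ hx hy => filter_upwards [hx, hy] with n h1 h2; rw [map_add, h1, h2]
    | smul c x _ hx => filter_upwards [hx] with n h1; rw [map_smul, h1]
  rw [Metric.tendsto_atTop']
  intro ε hε
  obtain ⟨Y, hY, hXY⟩ := Metric.mem_closure_iff.1 hX (ε / 2) (by positivity)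
  obtain ⟨N, hN⟩ := Filter.eventually_atTop.1 (hspan Y hY)
  refine ⟨N, fun n hn => ?_⟩
  have h1 := hL n (X - Y)
  rw [map_sub, hN n hn.le] at h1
  rw [dist_eq_norm] at *
  calc ‖L n X - X‖ = ‖(L n X - Y) - (X - Y)‖ := by congr 1; abel
    _ ≤ ‖L n X - Y‖ + ‖X - Y‖ := norm_sub_le _ _
    _ < ε := by linarith

lemma tendsto_left (X : Hs →L[ℂ] Hs) (hX : X ∈ KK) :
    Filter.Tendsto (fun n => Pn n * X) Filter.atTop (nhds X) := by
  refine tendsto_KK (fun n => ContinuousLinearMap.mul ℂ _ (Pn n)) ?_ ?_ X hX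
  · intro n X
    exact (norm_mul_le _ _).trans (mul_le_of_le_one_left (norm_nonneg _) (Pn_norm n))
  · intro i j
    filter_upwards [Filter.eventually_gt_atTop i] with n hn
    rw [ContinuousLinearMap.mul_apply', Pn_mul_E, if_pos hn]

lemma tendsto_right (X : Hs →L[ℂ] Hs) (hX : X ∈ KK) :
    Filter.Tendsto (fun n => X * Pn n) Filter.atTop (nhds X) := by
  refine tendsto_KK (fun n => (ContinuousLinearMap.mul ℂ _).flip (Pn n)) ?_ ?_ X hX
  · intro n X
    exact (norm_mul_le _ _).trans (mul_le_of_le_one_right (norm_nonneg _) (Pn_norm n))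
  · intro i j
    filter_upwards [Filter.eventually_gt_atTop j] with n hn
    rw [ContinuousLinearMap.flip_apply, ContinuousLinearMap.mul_apply', E_mul_Pn, if_pos hn]

/-- functionals on compacts are approximated by their corners -/
lemma KK_dual {C : Type*} [NormedAddCommGroup C] [NormedSpace ℂ C]
    (k : C →L[ℂ] (Hs →L[ℂ] Hs)) (hk : ∀ c, ‖k c‖ = ‖c‖)
    (hkm : ∀ c, k c ∈ KK) (hkr : ∀ T ∈ KK, ∃ c, k c = T)
    (f : StrongDual ℂ C) (ε : ℝ) (hε : 0 < ε) : ∃ n : ℕ, ∀ X Y : C,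
    k Y = Pn n * k X * Pn n → ‖f X - f Y‖ ≤ ε * ‖X‖ := by
  have hinj : ∀ a b, k a = k b → a = b := by
    intro a b h
    have := hk (a - b)
    rw [map_sub, h, sub_self, norm_zero] at this
    exact sub_eq_zero.1 (norm_eq_zero.1 this.symm)
  have hconv : ∀ (u : ℕ → C) (X : C), Filter.Tendsto (fun n => k (u n)) Filter.atTop (nhds (k X)) →
      Filter.Tendsto u Filter.atTop (nhds X) := by
    intro u X h
    rw [tendsto_iff_norm_sub_tendsto_zero] at h ⊢
    refine h.congr fun n => ?_
    rw [← map_sub, hk]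
  choose L hL using fun n X => hkr _ (Pn_mul_mem n _ (hkm X))
  choose R hR using fun n X => hkr _ (mul_Pn_mem n _ (hkm X))
  have h1 := abs_lemma f L
    (fun n c X => hinj _ _ (by rw [hL, map_smul, map_smul, hL, mul_smul_comm]))
    (fun X => hconv _ _ (by simp_rw [hL]; exact tendsto_left _ (hkm X)))
    (fun n X Y => by
      rw [← hk, ← hk X, ← hk Y, map_add, map_sub, hL, hL]; exact left_ineq n _ _)
    (ε / 2) (by positivity)
  have h2 := abs_lemma f R
    (fun n c X => hinj _ _ (by rw [hR, map_smul, map_smul, hR, smul_mul_assoc]))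
    (fun X => hconv _ _ (by simp_rw [hR]; exact tendsto_right _ (hkm X)))
    (fun n X Y => by
      rw [← hk, ← hk X, ← hk Y, map_add, map_sub, hR, hR]; exact right_ineq n _ _)
    (ε / 2) (by positivity)
  obtain ⟨n, h1, h2⟩ := (h1.and h2).exists
  refine ⟨n, fun X Y hY => ?_⟩
  have hY' : Y = R n (L n X) := hinj _ _ (by rw [hY, hR, hL])
  have a1 := h1 X
  have a2 := h2 (L n X)
  rw [map_sub] at a1 a2
  have a3 : ‖L n X‖ ≤ ‖X‖ := by
    rw [← hk, ← hk X, hL]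
    exact (norm_mul_le _ _).trans (mul_le_of_le_one_left (norm_nonneg _) (Pn_norm n))
  rw [hY']
  calc _ = ‖(f X - f (L n X)) + (f (L n X) - f (R n (L n X)))‖ := by congr 1; abel
    _ ≤ _ := norm_add_le _ _
    _ ≤ ε / 2 * ‖X‖ + ε / 2 * ‖X‖ := add_le_add a1 (a2.trans (by gcongr))
    _ = _ := by ring

/-- vector functional -/
def om (x y : Hs) : (Hs →L[ℂ] Hs) →L[ℂ] ℂ :=
  (innerSL ℂ x).comp (ContinuousLinearMap.apply ℂ Hs y)

lemma om_apply (x y : Hs) (X : Hs →L[ℂ] Hs) : om x y X = ⟪x, X y⟫_ℂ := rfl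

lemma om_E (a b i j : ℕ) : om (e a) (e b) (E i j) = if a = i ∧ j = b then 1 else 0 := by
  rw [om_apply, E_apply, inner_smul_right, inner_e, inner_e]
  by_cases h1 : a = i <;> by_cases h2 : j = b <;> simp [h1, h2]

lemma om_one (a : ℕ) : om (e a) (e a) 1 = 1 := by
  rw [om_apply, one_apply_eq_self, inner_e, if_pos rfl]

lemma K0_le : K0 ≤ KK := by
  apply Submodule.topologicalClosure_mono
  apply Submodule.span_mono
  rintro _ ⟨i, j, _, rfl⟩
  exact ⟨i, j, rfl⟩

lemma K0_entry (X : Hs →L[ℂ] Hs) (hX : X ∈ K0) : om (e 0) (e 0) X = 0 := by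
  have : K0 ≤ LinearMap.ker (om (e 0) (e 0) : (Hs →L[ℂ] Hs) →ₗ[ℂ] ℂ) := by
    apply Submodule.topologicalClosure_minimal
    · rw [Submodule.span_le]
      rintro _ ⟨i, j, hij, rfl⟩
      change om (e 0) (e 0) (E i j) = 0
      rw [om_E, if_neg]
      rintro ⟨h1, h2⟩
      exact hij (by rw [← h1, h2])
    · exact (isClosed_singleton (x := (0 : ℂ))).preimage (om (e 0) (e 0)).continuous
  exact this hX

lemma KK_sub (X : Hs →L[ℂ] Hs) (hX : X ∈ KK) : X - om (e 0) (e 0) X • E 0 0 ∈ K0 := by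
  refine KK_map (ContinuousLinearMap.id ℂ _ - (om (e 0) (e 0)).smulRight (E 0 0)) K0
    (Submodule.isClosed_topologicalClosure _) ?_ X hX
  intro i j
  change E i j - om (e 0) (e 0) (E i j) • E 0 0 ∈ K0
  rw [om_E]
  split_ifs with h
  · obtain ⟨h1, h2⟩ := h
    subst h1; subst h2; simp
  · rw [zero_smul, sub_zero]
    refine Submodule.le_topologicalClosure _ (Submodule.subset_span ⟨i, j, ?_, rfl⟩)
    intro h3
    simp only [Prod.mk.injEq] at h3
    exact h ⟨h3.1.symm, h3.2⟩

lemma S0_of_KK (c : ℂ) (K : Hs →L[ℂ] Hs) (hK : K ∈ KK) (h0 : om (e 0) (e 0) K = 0) :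
    c • 1 + K ∈ S0 := by
  refine Submodule.add_mem_sup (Submodule.smul_mem _ _ (Submodule.mem_span_singleton_self _)) ?_
  have := KK_sub K hK
  rwa [h0, zero_smul, sub_zero] at this

lemma S0_to_KK (X : Hs →L[ℂ] Hs) (hX : X ∈ S0) :
    X - om (e 0) (e 0) X • (1 - E 0 0) ∈ KK := by
  obtain ⟨a, ha, K, hK, rfl⟩ := Submodule.mem_sup.1 hX
  obtain ⟨c, rfl⟩ := Submodule.mem_span_singleton.1 ha
  have : om (e 0) (e 0) (c • 1 + K) = c := by
    rw [map_add, map_smul, om_one, K0_entry K hK]; simp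
  rw [this]
  have h2 : c • (1 : Hs →L[ℂ] Hs) + K - c • (1 - E 0 0) = K + c • E 0 0 := by
    rw [smul_sub]; abel
  rw [h2]
  exact add_mem (K0_le hK) (Submodule.smul_mem _ _ (E_mem_KK 0 0))

/-- the map from S0 to compacts -/
def Mm : S0 →L[ℂ] KK :=
  ((ContinuousLinearMap.id ℂ _ - (om (e 0) (e 0)).smulRight (1 - E 0 0)).comp
    S0.subtypeL).codRestrict KK (fun X => S0_to_KK X X.2)

lemma Mm_coe (X : S0) : (Mm X : Hs →L[ℂ] Hs) = X - om (e 0) (e 0) X • (1 - E 0 0) := rfl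

lemma KK_to_S0 (K : Hs →L[ℂ] Hs) (hK : K ∈ KK) : K + om (e 0) (e 0) K • (1 - E 0 0) ∈ S0 := by
  have := S0_of_KK (om (e 0) (e 0) K) _ (K0_le (KK_sub K hK)) (K0_entry _ (KK_sub K hK))
  convert this using 1
  rw [smul_sub]; abel

/-- the map from compacts to S0 -/
def Lm : KK →L[ℂ] S0 :=
  ((ContinuousLinearMap.id ℂ _ + (om (e 0) (e 0)).smulRight (1 - E 0 0)).comp
    KK.subtypeL).codRestrict S0 (fun X => KK_to_S0 X X.2)

lemma Lm_coe (X : KK) : (Lm X : Hs →L[ℂ] Hs) = X + om (e 0) (e 0) X • (1 - E 0 0) := rfl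

lemma Lm_Mm (X : S0) : Lm (Mm X) = X := by
  ext1
  rw [Lm_coe, Mm_coe]
  have : om (e 0) (e 0) ((X : Hs →L[ℂ] Hs) - om (e 0) (e 0) X • (1 - E 0 0))
      = om (e 0) (e 0) X := by
    rw [map_sub, map_smul, map_sub, om_one, om_E]; simp
  rw [this, sub_add_cancel]

lemma corner (n : ℕ) (T : Hs →L[ℂ] Hs) : Pn n * T * Pn n =
    ∑ i ∈ Finset.range n, ∑ j ∈ Finset.range n, om (e i) (e j) T • E i j := by
  rw [Pn, Finset.sum_mul, Finset.sum_mul]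
  refine Finset.sum_congr rfl fun i _ => ?_
  rw [Finset.mul_sum]
  refine Finset.sum_congr rfl fun j _ => ?_
  ext1 x
  simp only [mul_apply_eq_comp, E_apply, map_smul, om_apply,
    smul_apply]
  rw [smul_smul, smul_smul, mul_comm]

lemma corner_mem (n : ℕ) (T : Hs →L[ℂ] Hs) : Pn n * T * Pn n ∈ KK := by
  rw [corner]
  exact sum_mem fun i _ => sum_mem fun j _ => Submodule.smul_mem _ _ (E_mem_KK i j)

/-- vector functionals on S0 -/
def omS {A : Type*} [NormedAddCommGroup A] [NormedSpace ℂ A]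
    (j : A →L[ℂ] (Hs →L[ℂ] Hs)) (x y : Hs) : StrongDual ℂ A := (om x y).comp j

lemma omS_apply {A : Type*} [NormedAddCommGroup A] [NormedSpace ℂ A]
    (j : A →L[ℂ] (Hs →L[ℂ] Hs)) (x y : Hs) (X : A) : omS j x y X = ⟪x, j X y⟫_ℂ := rfl

lemma bidual_zero {A C : Type*} [NormedAddCommGroup A] [NormedSpace ℂ A]
    [NormedAddCommGroup C] [NormedSpace ℂ C] (j : A →L[ℂ] (Hs →L[ℂ] Hs))
    (k : C →L[ℂ] (Hs →L[ℂ] Hs)) (hk : ∀ c, ‖k c‖ = ‖c‖)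
    (hkm : ∀ c, k c ∈ KK) (hkr : ∀ T ∈ KK, ∃ c, k c = T)
    (M : A →L[ℂ] C) (L : C →L[ℂ] A) (hLM : ∀ a, L (M a) = a)
    (hM : ∀ a, k (M a) = j a - om (e 0) (e 0) (j a) • (1 - E 0 0))
    (F : StrongDual ℂ (StrongDual ℂ A)) (hF : ∀ x y, F (omS j x y) = 0) :
    F = 0 := by
  have hinj : ∀ a b, k a = k b → a = b := by
    intro a b h
    have := hk (a - b)
    rw [map_sub, h, sub_self, norm_zero] at this
    exact sub_eq_zero.1 (norm_eq_zero.1 this.symm)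
  choose u hu using fun i j => hkr _ (E_mem_KK i j)
  ext f
  rw [zero_apply, ← norm_le_zero_iff]
  apply le_of_forall_pos_le_add
  intro δ hδ
  set D := ‖F‖ * ‖M‖ + 1 with hD
  have hD0 : 0 < D := by positivity
  obtain ⟨n, hn⟩ := KK_dual k hk hkm hkr (f.comp L) (δ / D) (by positivity)
  let g : StrongDual ℂ A := ∑ i ∈ Finset.range n, ∑ l ∈ Finset.range n,
    f (L (u i l)) •
      (omS j (e i) (e l) - om (e i) (e l) (1 - E 0 0) • omS j (e 0) (e 0))
  have hg : F g = 0 := by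
    simp only [g, map_sum, map_smul, map_sub, hF]
    simp
  have hgX : ∀ X, ∃ Y : C, k Y = Pn n * k (M X) * Pn n ∧ g X = f (L Y) := by
    intro X
    refine ⟨∑ i ∈ Finset.range n, ∑ l ∈ Finset.range n, om (e i) (e l) (k (M X)) • u i l, ?_, ?_⟩
    · rw [corner]
      simp only [map_sum, map_smul, hu]
    simp only [g, map_sum, map_smul, sum_apply, smul_apply, sub_apply]
    refine Finset.sum_congr rfl fun i _ => Finset.sum_congr rfl fun l _ => ?_
    rw [hM, map_sub (om (e i) (e l)) (j X), map_smul, smul_eq_mul, smul_eq_mul, smul_eq_mul,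
      smul_eq_mul, mul_comm (f _)]
    congr 1
    rw [mul_comm]
    rfl
  have hfg : ‖f - g‖ ≤ δ / D * ‖M‖ := by
    apply ContinuousLinearMap.opNorm_le_bound _ (by positivity)
    intro X
    obtain ⟨Y, hY, hgY⟩ := hgX X
    have h := hn (M X) Y hY
    rw [sub_apply, hgY]
    rw [ContinuousLinearMap.comp_apply, hLM, ContinuousLinearMap.comp_apply] at h
    refine h.trans ?_
    rw [mul_assoc]
    gcongr
    exact M.le_opNorm X
  have h3 : F f = F (f - g) := by rw [map_sub, hg, sub_zero]
  rw [h3, zero_add]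
  calc _ ≤ ‖F‖ * ‖f - g‖ := F.le_opNorm _
    _ ≤ ‖F‖ * (δ / D * ‖M‖) := by gcongr
    _ = δ * ((‖F‖ * ‖M‖) / D) := by ring
    _ ≤ δ * 1 := by
      gcongr
      rw [div_le_one hD0, hD]; linarith
    _ = δ := mul_one _

lemma exists_op {A : Type*} [NormedAddCommGroup A] [NormedSpace ℂ A]
    (j : A →L[ℂ] (Hs →L[ℂ] Hs)) (hj : ∀ a, ‖j a‖ = ‖a‖) (F : StrongDual ℂ (StrongDual ℂ A)) :
    ∃ T : Hs →L[ℂ] Hs, ∀ x y, ⟪x, T y⟫_ℂ = F (omS j x y) := by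
  let B0 : Hs →ₗ⋆[ℂ] Hs →ₗ[ℂ] ℂ := LinearMap.mk₂'ₛₗ (starRingEnd ℂ) (RingHom.id ℂ)
    (fun x y => F (omS j x y))
    (fun x x' y => by
      rw [← map_add]; congr 1; ext X; simp [omS_apply])
    (fun c x y => by
      rw [← map_smul]; congr 1; ext X; simp [omS_apply, mul_comm])
    (fun x y y' => by
      rw [← map_add]; congr 1; ext X; simp [omS_apply])
    (fun c x y => by
      rw [← map_smul]; congr 1; ext X; simp [omS_apply])
  let B : Hs →L⋆[ℂ] Hs →L[ℂ] ℂ := B0.mkContinuous₂ ‖F‖ (fun x y => by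
    change ‖F (omS j x y)‖ ≤ _
    refine (F.le_opNorm _).trans ?_
    rw [mul_assoc]
    gcongr
    apply ContinuousLinearMap.opNorm_le_bound _ (by positivity)
    intro X
    rw [omS_apply]
    calc _ ≤ ‖x‖ * ‖j X y‖ := norm_inner_le_norm _ _
      _ ≤ ‖x‖ * (‖j X‖ * ‖y‖) := by gcongr; exact ContinuousLinearMap.le_opNorm _ _
      _ = ‖x‖ * ‖y‖ * ‖X‖ := by rw [hj]; ring)
  refine ⟨ContinuousLinearMap.adjoint (InnerProductSpace.continuousLinearMapOfBilin B), ?_⟩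
  intro x y
  rw [ContinuousLinearMap.adjoint_inner_right,
    InnerProductSpace.continuousLinearMapOfBilin_apply]
  rfl

lemma op_ext (S T : Hs →L[ℂ] Hs) (h : ∀ x y, ⟪x, S y⟫_ℂ = ⟪x, T y⟫_ℂ) : S = T := by
  ext1 y
  exact ext_inner_left ℂ fun x => h x y

/-- approximants -/
def Rn (n : ℕ) (T : Hs →L[ℂ] Hs) : Hs →L[ℂ] Hs :=
  Pn n * T * Pn n + om (e 0) (e 0) T • (1 - Pn n)

lemma Pn_mem (n : ℕ) : Pn n ∈ KK := sum_mem fun i _ => E_mem_KK i i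

lemma Pn_e (n : ℕ) : Pn (n+1) (e 0) = e 0 := by
  simp [Pn_apply, inner_e]

lemma om_Pn (n : ℕ) : om (e 0) (e 0) (Pn (n+1)) = 1 := by
  rw [om_apply, Pn_e, inner_e, if_pos rfl]

lemma Rn_mem (n : ℕ) (T : Hs →L[ℂ] Hs) : Rn (n+1) T ∈ S0 := by
  have h := S0_of_KK (om (e 0) (e 0) T) (Pn (n+1) * T * Pn (n+1) - om (e 0) (e 0) T • Pn (n+1))
    (sub_mem (corner_mem _ _) (Submodule.smul_mem _ _ (Pn_mem _))) (by
      rw [map_sub, map_smul, om_Pn, om_apply, mul_apply_eq_comp, mul_apply_eq_comp, Pn_e,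
        ← Pn_symm, Pn_e, om_apply]
      simp)
  convert h using 1
  rw [Rn, smul_sub]; abel

lemma Rn_norm (n : ℕ) (T : Hs →L[ℂ] Hs) : ‖Rn n T‖ ≤ ‖T‖ + ‖om (e 0) (e 0) T‖ * 2 := by
  refine (norm_add_le _ _).trans (add_le_add ?_ ?_)
  · calc _ ≤ ‖Pn n * T‖ * ‖Pn n‖ := norm_mul_le _ _
      _ ≤ (‖Pn n‖ * ‖T‖) * ‖Pn n‖ := by gcongr; exact norm_mul_le _ _
      _ ≤ (1 * ‖T‖) * 1 := by gcongr <;> exact Pn_norm n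
      _ = _ := by ring
  · rw [norm_smul]
    gcongr
    refine (norm_sub_le _ _).trans ?_
    have := Pn_norm n
    have h1 : ‖(1 : Hs →L[ℂ] Hs)‖ ≤ 1 := ContinuousLinearMap.norm_id_le
    linarith

lemma inner_Rn (n : ℕ) (T : Hs →L[ℂ] Hs) (x y : Hs) :
    ⟪x, Rn n T y⟫_ℂ = ⟪Pn n x, T (Pn n y)⟫_ℂ + om (e 0) (e 0) T * ⟪x, y - Pn n y⟫_ℂ := by
  rw [Pn_symm, ← inner_smul_right, ← inner_add_right]
  rfl

lemma Rn_tendsto (T : Hs →L[ℂ] Hs) (x y : Hs) :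
    Filter.Tendsto (fun n => ⟪x, Rn n T y⟫_ℂ) Filter.atTop (nhds ⟪x, T y⟫_ℂ) := by
  simp_rw [inner_Rn]
  have h1 := (Pn_tendsto x).inner (𝕜 := ℂ) ((T.continuous.tendsto y).comp (Pn_tendsto y))
  have h2 := ((tendsto_const_nhds (x := x)).inner (𝕜 := ℂ)
    ((tendsto_const_nhds (x := y)).sub (Pn_tendsto y))).const_mul (om (e 0) (e 0) T)
  have := h1.add h2
  rwa [sub_self, inner_zero_right, mul_zero, add_zero] at this

lemma pos_iff (T : Hs →L[ℂ] Hs) : T.IsPositive ↔ ∀ x, 0 ≤ ⟪x, T x⟫_ℂ := by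
  constructor
  · intro h x
    exact h.inner_nonneg_right x
  · intro h
    rw [ContinuousLinearMap.isPositive_iff_complex]
    intro x
    have h1 := h x
    have h2 : ⟪T x, x⟫_ℂ = ⟪x, T x⟫_ℂ := by
      rw [← inner_conj_symm]
      exact Complex.conj_eq_iff_im.2 (Complex.nonneg_iff.1 h1).2.symm
    rw [h2]
    obtain ⟨h3, h4⟩ := Complex.nonneg_iff.1 h1
    exact ⟨Complex.ext (by simp) (by simpa using h4), h3⟩

lemma Rn_pos (n : ℕ) (T : Hs →L[ℂ] Hs) (hT : T.IsPositive) : (Rn n T).IsPositive := by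
  rw [pos_iff] at *
  intro x
  rw [inner_Rn]
  refine add_nonneg (hT _) (mul_nonneg (hT _) ?_)
  have : ⟪x, x - Pn n x⟫_ℂ = ⟪x - Pn n x, x - Pn n x⟫_ℂ := by
    rw [inner_sub_left (x := x) (y := Pn n x), Pn_orth, sub_zero]
  rw [this, inner_self_eq_norm_sq_to_K]
  have : (0 : ℂ) ≤ ((‖x - Pn n x‖ ^ 2 : ℝ) : ℂ) := by
    rw [Complex.zero_le_real]; positivity
  simp

lemma exists_F {A : Type*} [NormedAddCommGroup A] [NormedSpace ℂ A]
    (j : A →L[ℂ] (Hs →L[ℂ] Hs)) (hj : ∀ a, ‖j a‖ = ‖a‖) (T : Hs →L[ℂ] Hs)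
    (v : ℕ → A) (hv : ∀ n, j (v n) = Rn (n+1) T) : ∃ F : StrongDual ℂ (StrongDual ℂ A),
    ∀ f : StrongDual ℂ A, Filter.Tendsto (fun n => f (v n))
      (Filter.hyperfilter ℕ : Filter ℕ) (nhds (F f)) := by
  set C := ‖T‖ + ‖om (e 0) (e 0) T‖ * 2
  let u : ℕ → WeakDual ℂ (StrongDual ℂ A) := fun n =>
    WeakDual.toStrongDual.symm (NormedSpace.inclusionInDoubleDual ℂ A (v n))
  have hc := WeakDual.isCompact_closedBall (0 : StrongDual ℂ (StrongDual ℂ A)) C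
  obtain ⟨F, -, hF⟩ := hc.ultrafilter_le_nhds ((Filter.hyperfilter ℕ).map u) (by
    rw [Filter.le_principal_iff]
    refine Filter.mem_map.2 (Filter.univ_mem' fun n => ?_)
    simp only [Set.mem_preimage, u, LinearEquiv.apply_symm_apply, mem_closedBall_zero_iff]
    refine (NormedSpace.double_dual_bound ℂ A _).trans ?_
    rw [← hj, hv]
    exact Rn_norm (n+1) T)
  refine ⟨WeakDual.toStrongDual F, fun f => ?_⟩
  exact ((WeakDual.eval_continuous f).tendsto F).comp hF

theorem core {A C : Type*} [NormedAddCommGroup A] [NormedSpace ℂ A]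
    [NormedAddCommGroup C] [NormedSpace ℂ C] (j : A →L[ℂ] (Hs →L[ℂ] Hs))
    (hj : ∀ a, ‖j a‖ = ‖a‖) (hjr : ∀ T ∈ S0, ∃ a, j a = T)
    (k : C →L[ℂ] (Hs →L[ℂ] Hs)) (hk : ∀ c, ‖k c‖ = ‖c‖)
    (hkm : ∀ c, k c ∈ KK) (hkr : ∀ T ∈ KK, ∃ c, k c = T)
    (M : A →L[ℂ] C) (L : C →L[ℂ] A) (hLM : ∀ a, L (M a) = a)
    (hM : ∀ a, k (M a) = j a - om (e 0) (e 0) (j a) • (1 - E 0 0))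
    (a1 : A) (ha1 : j a1 = 1) :
    ∃ Φ : StrongDual ℂ (StrongDual ℂ A) ≃ₗ[ℂ] (Hs →L[ℂ] Hs),
      Φ (NormedSpace.inclusionInDoubleDual ℂ A a1) = 1 ∧
      ∀ F : StrongDual ℂ (StrongDual ℂ A),
        (∀ f : StrongDual ℂ A,
            (∀ X : A, (j X).IsPositive → 0 ≤ f X) → 0 ≤ F f) ↔
          (Φ F).IsPositive := by
  choose φ hφ using exists_op j hj
  choose v hv using fun T n => hjr _ (Rn_mem n T)
  let Φ : StrongDual ℂ (StrongDual ℂ A) →ₗ[ℂ] (Hs →L[ℂ] Hs) :=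
    { toFun := φ
      map_add' := fun F G => op_ext _ _ fun x y => by
        rw [hφ, add_apply, add_apply, inner_add_right, hφ, hφ]
      map_smul' := fun c F => op_ext _ _ fun x y => by
        rw [hφ, smul_apply, RingHom.id_apply, smul_apply, inner_smul_right, hφ, smul_eq_mul] }
  have hinj : Function.Injective Φ := by
    rw [injective_iff_map_eq_zero]
    intro F hF
    refine bidual_zero j k hk hkm hkr M L hLM hM F fun x y => ?_
    rw [← hφ]
    change ⟪x, (Φ F) y⟫_ℂ = 0
    rw [hF]; simp
  have hlim : ∀ (T : Hs →L[ℂ] Hs) (F : StrongDual ℂ (StrongDual ℂ A)),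
      (∀ f : StrongDual ℂ A, Filter.Tendsto (fun n => f (v T n))
      (Filter.hyperfilter ℕ : Filter ℕ) (nhds (F f))) → Φ F = T := by
    intro T F hF
    refine op_ext _ _ fun x y => ?_
    change ⟪x, φ F y⟫_ℂ = _
    rw [hφ]
    refine tendsto_nhds_unique (hF (omS j x y)) ?_
    have h := (Rn_tendsto T x y).comp (Filter.tendsto_add_atTop_nat 1)
    simp_rw [omS_apply, hv]
    exact h.mono_left (by rw [← Nat.cofinite_eq_atTop]; exact Filter.hyperfilter_le_cofinite)
  have hsurj : Function.Surjective Φ := fun T => by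
    obtain ⟨F, hF⟩ := exists_F j hj T (v T) (hv T)
    exact ⟨F, hlim T F hF⟩
  refine ⟨LinearEquiv.ofBijective Φ ⟨hinj, hsurj⟩, ?_, ?_⟩
  · change Φ _ = 1
    refine op_ext _ _ fun x y => ?_
    change ⟪x, φ _ y⟫_ℂ = _
    rw [hφ, NormedSpace.dual_def, omS_apply, ha1]
  · intro F
    change _ ↔ (Φ F).IsPositive
    constructor
    · intro h
      rw [pos_iff]
      intro x
      change 0 ≤ ⟪x, φ F x⟫_ℂ
      rw [hφ]
      refine h _ fun X hX => ?_
      exact (pos_iff _).1 hX x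
    · intro h f hf
      obtain ⟨G, hG⟩ := exists_F j hj (Φ F) (v _) (hv _)
      have hGF : G = F := hinj (hlim _ _ hG)
      rw [← hGF]
      exact ge_of_tendsto' (hG f) fun n => hf _ (by rw [hv]; exact Rn_pos _ _ h)


/-- synonym of S0 -/
def AS : Type := S0
/-- synonym of KK -/
def CK : Type := KK

instance instAS : NormedAddCommGroup AS := inferInstanceAs (NormedAddCommGroup S0)
instance instASs : NormedSpace ℂ AS := inferInstanceAs (NormedSpace ℂ S0)
instance instCK : NormedAddCommGroup CK := inferInstanceAs (NormedAddCommGroup KK)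
instance instCKs : NormedSpace ℂ CK := inferInstanceAs (NormedSpace ℂ KK)

/-- identity -/
def sA : S0 ≃L[ℂ] AS where
  toFun := fun a => a
  invFun := fun a => a
  map_add' := fun _ _ => rfl
  map_smul' := fun _ _ => rfl
  left_inv := fun _ => rfl
  right_inv := fun _ => rfl
  continuous_toFun := continuous_id
  continuous_invFun := continuous_id

/-- identity -/
def sC : KK ≃L[ℂ] CK where
  toFun := fun a => a
  invFun := fun a => a
  map_add' := fun _ _ => rfl
  map_smul' := fun _ _ => rfl
  left_inv := fun _ => rfl
  right_inv := fun _ => rfl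
  continuous_toFun := continuous_id
  continuous_invFun := continuous_id

lemma sA_norm (a : S0) : ‖sA a‖ = ‖(a : Hs →L[ℂ] Hs)‖ := rfl
lemma sC_norm (a : KK) : ‖sC a‖ = ‖(a : Hs →L[ℂ] Hs)‖ := rfl

/-- inclusion -/
def jA : AS →L[ℂ] (Hs →L[ℂ] Hs) := S0.subtypeL.comp (sA.symm : AS →L[ℂ] S0)
/-- inclusion -/
def kC : CK →L[ℂ] (Hs →L[ℂ] Hs) := KK.subtypeL.comp (sC.symm : CK →L[ℂ] KK)

lemma jA_s (a : S0) : jA (sA a) = a := rfl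
lemma kC_s (a : KK) : kC (sC a) = a := rfl

lemma core2 : ∃ Φ : StrongDual ℂ (StrongDual ℂ AS) ≃ₗ[ℂ] (Hs →L[ℂ] Hs),
      Φ (NormedSpace.inclusionInDoubleDual ℂ AS (sA ⟨1, one_mem_S0⟩)) = 1 ∧
      ∀ F : StrongDual ℂ (StrongDual ℂ AS),
        (∀ f : StrongDual ℂ AS,
            (∀ X : AS, (jA X).IsPositive → 0 ≤ f X) → 0 ≤ F f) ↔
          (Φ F).IsPositive := by
  refine core (A := AS) (C := CK) jA ?_ ?_ kC ?_ ?_ ?_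
    ((sC : KK →L[ℂ] CK).comp (Mm.comp (sA.symm : AS →L[ℂ] S0)))
    ((sA : S0 →L[ℂ] AS).comp (Lm.comp (sC.symm : CK →L[ℂ] KK))) ?_ ?_ _ ?_
  · intro a
    obtain ⟨b, rfl⟩ := sA.surjective a
    rw [jA_s, sA_norm]
  · intro T hT
    exact ⟨sA ⟨T, hT⟩, jA_s _⟩
  · intro a
    obtain ⟨b, rfl⟩ := sC.surjective a
    rw [kC_s, sC_norm]
  · intro a
    obtain ⟨b, rfl⟩ := sC.surjective a
    rw [kC_s]; exact b.2
  · intro T hT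
    exact ⟨sC ⟨T, hT⟩, kC_s _⟩
  · intro a
    obtain ⟨b, rfl⟩ := sA.surjective a
    change sA (Lm (sC.symm (sC (Mm (sA.symm (sA b)))))) = sA b
    rw [sC.symm_apply_apply, sA.symm_apply_apply, Lm_Mm]
  · intro a
    obtain ⟨b, rfl⟩ := sA.surjective a
    change kC (sC (Mm (sA.symm (sA b)))) = _
    rw [sA.symm_apply_apply, kC_s, jA_s, Mm_coe]
  · exact jA_s _

/-- the bidual `S₀**` is unitally order isomorphic to `B(ℓ²(ℕ))`: there is a
linear bijection `Φ : S₀** → B(ℓ²(ℕ))` sending the canonical image of the identity to the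
identity operator, such that `F` lies in the positive cone of `S₀**` (i.e. `F` is
nonnegative on every positive functional on `S₀`) iff `Φ F` is a positive operator. -/
theorem stmt_10 :
    ∃ Φ : StrongDual ℂ (StrongDual ℂ ↥S0) ≃ₗ[ℂ] (Hs →L[ℂ] Hs),
      Φ (NormedSpace.inclusionInDoubleDual ℂ ↥S0 ⟨1, one_mem_S0⟩) = 1 ∧
      ∀ F : StrongDual ℂ (StrongDual ℂ ↥S0),
        (∀ f : StrongDual ℂ ↥S0,
            (∀ X : ↥S0, (X : Hs →L[ℂ] Hs).IsPositive → 0 ≤ f X) → 0 ≤ F f) ↔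
          (Φ F).IsPositive := by
  obtain ⟨Φ, h1, h2⟩ := core2
  let s1 : StrongDual ℂ S0 ≃L[ℂ] StrongDual ℂ AS := sA.arrowCongr (ContinuousLinearEquiv.refl ℂ ℂ)
  let s2 : StrongDual ℂ (StrongDual ℂ S0) ≃ₗ[ℂ] StrongDual ℂ (StrongDual ℂ AS) :=
    { toFun := fun F => ContinuousLinearMap.comp F (s1.symm : StrongDual ℂ AS →L[ℂ] StrongDual ℂ S0)
      invFun := fun F => ContinuousLinearMap.comp F (s1 : StrongDual ℂ S0 →L[ℂ] StrongDual ℂ AS)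
      map_add' := fun F G => rfl
      map_smul' := fun c F => rfl
      left_inv := fun F => rfl
      right_inv := fun F => rfl }
  have hs1 : ∀ f a, s1 f (sA a) = f a := fun f a => rfl
  have hs1' : ∀ f a, s1.symm f a = f (sA a) := fun f a => rfl
  have hs2 : ∀ F f, s2 F f = F (s1.symm f) := fun F f => rfl
  refine ⟨s2.trans Φ, ?_, ?_⟩
  · refine Eq.trans ?_ h1
    change Φ (s2 _) = _
    refine congrArg Φ ?_
    refine ContinuousLinearMap.ext fun f => ?_
    rw [hs2]
    rfl
  · intro F
    change _ ↔ (Φ (s2 F)).IsPositive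
    rw [← h2]
    constructor
    · intro h f hf
      rw [hs2]
      refine h _ fun X hX => ?_
      rw [hs1']
      exact hf _ (by rwa [jA_s])
    · intro h f hf
      have := h (s1 f) (fun X hX => by
        obtain ⟨b, rfl⟩ := sA.surjective X
        rw [hs1]
        rw [jA_s] at hX
        exact hf _ hX)
      rwa [hs2, s1.symm_apply_apply] at this
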